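/- (Proposition 3.) Let S be a differentiable right inverse of H. Suppose the strategy p*(·) maximizes the GERI objective G over all strategies with values in the relative interior of Δ, and suppose p*(v) and p⁰ = Σ_{v ∈ 𝒱} μ(v) p*(v) all lie in the relative interior of Δ. Then: (i) p⁰ satisfies the fixed-point equation p⁰ = Σ_{v ∈ 𝒱} μ(v) ∇W(v + log S(p⁰)); (ii) for every v ∈ 𝒱 with μ(v) > 0, p*_i(v) = H_i(e^{v + log S(p⁰)}) / Σ_{j=1}^N H_j(e^{v + log S(p⁰)}) = ∂W(v + log S(p⁰))/∂v_i; (iii) the optimal value equals G(p*(·)) = Σ_{v ∈ 𝒱} μ(v) W(v + log S(p⁰)). -/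

import Mathlib

/-!
The surplus `W` is convex and everywhere differentiable, its gradient lying in the relative interior
of the simplex (`surplus_grad`, by differentiating under the integral sign: ties are null, so the
maximum is almost surely locally linear). As the gradient sums to one, `∑ H_i(e^u) = e^{W(u)}`, so
`u = log S(q)` satisfies `W(u) = 0` and `∇W(u) = q` (`surplus_log_inverse`). Therefore `Ω_S = -W*`
on the relative interior of the simplex: `q·u + Ω_S(q) ≤ W(u)` for all `u`, with equality exactly
when `q = ∇W(u)`.

Put `a = log S(p⁰)`. By `geriObj_eq`,
`G(p') = ∑ μ(v) ((v + a)·p'(v) + Ω_S(p'(v))) - (p'⁰·a + Ω_S(p'⁰))`, and the last bracket is at most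
`W(a) = 0`, with equality for `p' = p*`. Testing optimality of `p*` against `p'(v) = ∇W(v + a)` gives
`∑ μ(v) W(v + a) ≤ G(p') ≤ G(p*) = ∑ μ(v) ((v + a)·p*(v) + Ω_S(p*(v))) ≤ ∑ μ(v) W(v + a)`,
so all terms of positive weight agree: `p*(v)` is a subgradient, hence the gradient, of `W` at
`v + a`.
-/

open MeasureTheory Real

/-- The surplus function `W(v) = E[max_i (v_i + ε_i)]` of an additive random utility model,
where `μ` is the distribution of the random utility shocks `ε`. -/
noncomputable def surplus (N : ℕ) (μ : Measure (Fin N → ℝ)) (v : Fin N → ℝ) : ℝ :=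
  ∫ x, (⨆ i : Fin N, (v i + x i)) ∂μ

/-- The choice probability `q_i(v) = P(v_i + ε_i ≥ v_j + ε_j for all j)`. -/
noncomputable def choiceProb (N : ℕ) (μ : Measure (Fin N → ℝ)) (v : Fin N → ℝ) (i : Fin N) : ℝ :=
  (μ {x | ∀ j, v j + x j ≤ v i + x i}).toReal

/-- `H(y) = ∇(e^W)(log y)`, i.e. `H_i(e^v) = ∂(e^{W(v)})/∂v_i`. -/
noncomputable def genH (N : ℕ) (μ : Measure (Fin N → ℝ)) (y : Fin N → ℝ) (i : Fin N) : ℝ :=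
  fderiv ℝ (fun v => Real.exp (surplus N μ v)) (fun j => Real.log (y j)) (Pi.single i 1)

/-- The unit simplex `Δ` in `ℝ^N`. -/
def unitSimplex (N : ℕ) : Set (Fin N → ℝ) := {q | (∀ i, 0 ≤ q i) ∧ ∑ i, q i = 1}

/-- The relative interior of the unit simplex `Δ` in `ℝ^N`. -/
def unitSimplexRI (N : ℕ) : Set (Fin N → ℝ) := {q | (∀ i, 0 < q i) ∧ ∑ i, q i = 1}

/-- The unconditional choice probabilities `p⁰ = ∑_{v ∈ 𝒱} μ(v) p(v)` of a strategy `p(·)`. -/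
noncomputable def uncond (N : ℕ) (V : Finset (Fin N → ℝ)) (w : (Fin N → ℝ) → ℝ)
    (p : (Fin N → ℝ) → (Fin N → ℝ)) (i : Fin N) : ℝ :=
  ∑ v ∈ V, w v * p v i

/-- The generalized entropy `Ω_S(p) = −∑_i p_i log S_i(p)`. -/
noncomputable def genEntropy (N : ℕ) (S : (Fin N → ℝ) → (Fin N → ℝ)) (p : Fin N → ℝ) : ℝ :=
  -∑ i, p i * Real.log (S p i)

/-- The generalized-entropy information cost
`κ_S(p(·), μ) = Ω_S(p⁰) − ∑_{v ∈ 𝒱} μ(v) Ω_S(p(v))`. -/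
noncomputable def geriCost (N : ℕ) (V : Finset (Fin N → ℝ)) (w : (Fin N → ℝ) → ℝ)
    (S : (Fin N → ℝ) → (Fin N → ℝ)) (p : (Fin N → ℝ) → (Fin N → ℝ)) : ℝ :=
  genEntropy N S (uncond N V w p) - ∑ v ∈ V, w v * genEntropy N S (p v)

/-- The GERI objective `G(p(·)) = ∑_{v ∈ 𝒱} μ(v) (v·p(v)) − κ_S(p(·), μ)`. -/
noncomputable def geriObj (N : ℕ) (V : Finset (Fin N → ℝ)) (w : (Fin N → ℝ) → ℝ)
    (S : (Fin N → ℝ) → (Fin N → ℝ)) (p : (Fin N → ℝ) → (Fin N → ℝ)) : ℝ :=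
  ∑ v ∈ V, w v * (∑ i, v i * p v i) - geriCost N V w S p

/-! ### The maximum function and ties -/

lemma le_iSup_fin {N : ℕ} (y : Fin N → ℝ) (i : Fin N) : y i ≤ ⨆ j, y j :=
  le_ciSup (Set.finite_range y).bddAbove i

lemma lipschitz_iSup_fin (N : ℕ) [Nonempty (Fin N)] :
    LipschitzWith 1 (fun y : Fin N → ℝ => ⨆ i, y i) := by
  refine LipschitzWith.of_le_add fun y z => ciSup_le fun i => ?_
  have h1 : |y i - z i| ≤ dist y z := by
    rw [← Real.dist_eq]; exact dist_le_pi_dist y z i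
  linarith [le_iSup_fin z i, le_abs_self (y i - z i)]

lemma integrable_iSup_add {N : ℕ} [Nonempty (Fin N)] (μ : Measure (Fin N → ℝ))
    [IsProbabilityMeasure μ] (hint : ∀ i, Integrable (fun x => x i) μ) (u : Fin N → ℝ) :
    Integrable (fun x => ⨆ i, (u i + x i)) μ := by
  have hb : Integrable (fun x : Fin N → ℝ => ∑ i, |u i + x i|) μ :=
    integrable_finsetSum _ fun i _ => ((integrable_const (u i)).add (hint i)).abs
  have hc : Continuous (fun x : Fin N → ℝ => ⨆ i, (u i + x i)) :=
    (lipschitz_iSup_fin N).continuous.comp (g := fun y : Fin N → ℝ => ⨆ i, y i)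
      (f := fun (x : Fin N → ℝ) i => u i + x i) (by fun_prop)
  refine hb.mono' hc.aestronglyMeasurable (ae_of_all _ fun x => ?_)
  obtain ⟨i, hi⟩ := exists_eq_ciSup_of_finite (f := fun i => u i + x i)
  rw [← hi, Real.norm_eq_abs]
  exact Finset.single_le_sum (f := fun i => |u i + x i|) (fun _ _ => abs_nonneg _)
    (Finset.mem_univ i)

/-- The shocks for which alternative `i` is the unique best choice at payoffs `u`. -/
def strictWin {N : ℕ} (u : Fin N → ℝ) (i : Fin N) : Set (Fin N → ℝ) :=
  {x | ∀ j, j ≠ i → u j + x j < u i + x i}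

lemma isOpen_strictWin {N : ℕ} (u : Fin N → ℝ) (i : Fin N) : IsOpen (strictWin u i) := by
  have : strictWin u i = ⋂ j, {x | j ≠ i → u j + x j < u i + x i} := by
    ext x; simp [strictWin]
  rw [this]
  refine isOpen_iInter_of_finite fun j => ?_
  by_cases h : j = i
  · simp [h]
  · simp only [ne_eq, h, not_false_eq_true, forall_const]
    exact isOpen_lt (by fun_prop) (by fun_prop)

lemma strictWin_nonempty {N : ℕ} (u : Fin N → ℝ) (i : Fin N) : (strictWin u i).Nonempty := by
  refine ⟨fun j => (if j = i then 1 else 0) - u j, fun j hj => ?_⟩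
  simp [hj]

lemma strictWin_unique {N : ℕ} {u x : Fin N → ℝ} {i j : Fin N} (hi : x ∈ strictWin u i)
    (hj : x ∈ strictWin u j) : j = i := by
  by_contra h
  have h1 := hi j h
  have h2 := hj i (Ne.symm h)
  linarith

lemma iSup_of_strictWin {N : ℕ} [Nonempty (Fin N)] {u x : Fin N → ℝ} {i : Fin N}
    (hi : x ∈ strictWin u i) : ⨆ j, (u j + x j) = u i + x i := by
  refine le_antisymm (ciSup_le fun j => ?_) (le_iSup_fin (fun j => u j + x j) i)
  by_cases h : j = i
  · rw [h]
  · exact (hi j h).le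

/-- Ties lie in finitely many hyperplanes, so almost surely there is a unique best choice. -/
lemma ae_exists_strictWin {N : ℕ} [Nonempty (Fin N)] {μ : Measure (Fin N → ℝ)}
    (hac : μ ≪ volume) (u : Fin N → ℝ) : ∀ᵐ x ∂μ, ∃ i, x ∈ strictWin u i := by
  have key : ∀ i j : Fin N, i ≠ j → ∀ᵐ x ∂μ, u i + x i ≠ u j + x j := by
    intro i j hij
    suffices h : ∀ᵐ x ∂(volume : Measure (Fin N → ℝ)), u i + x i ≠ u j + x j from hac.ae_le h
    let L : (Fin N → ℝ) →ₗ[ℝ] ℝ := (LinearMap.proj i : (Fin N → ℝ) →ₗ[ℝ] ℝ) - LinearMap.proj j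
    have hL : LinearMap.ker L ≠ ⊤ := by
      intro h
      have h1 : (Pi.single i 1 : Fin N → ℝ) ∈ LinearMap.ker L := by rw [h]; trivial
      simp [L, hij.symm] at h1
    have h0 := Measure.addHaar_submodule (volume : Measure (Fin N → ℝ)) _ hL
    rw [ae_iff]
    -- The tie set is a translate of the kernel of `x ↦ x i - x j`.
    have h2 := measure_preimage_add_right (volume : Measure (Fin N → ℝ)) u
      (LinearMap.ker L : Set (Fin N → ℝ))
    rw [h0] at h2
    rw [← h2]
    congr 1
    ext x
    simp only [ne_eq, not_not, Set.mem_ofPred_eq, Set.mem_preimage, SetLike.mem_coe,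
      LinearMap.mem_ker, L, LinearMap.sub_apply, LinearMap.proj_apply, Pi.add_apply]
    constructor <;> intro h <;> linarith
  have key' : ∀ᵐ x ∂μ, ∀ i j : Fin N, i ≠ j → u i + x i ≠ u j + x j := by
    rw [ae_all_iff]; intro i
    rw [ae_all_iff]; intro j
    by_cases h : i = j
    · simp [h]
    · filter_upwards [key i j h] with x hx _ using hx
  filter_upwards [key'] with x hx
  obtain ⟨i, hi⟩ := exists_eq_ciSup_of_finite (f := fun i => u i + x i)
  refine ⟨i, fun j hj => lt_of_le_of_ne ?_ (hx j i hj)⟩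
  rw [hi]
  exact le_iSup_fin (fun j => u j + x j) j

/-! ### Convexity and differentiability of the surplus -/

/-- Williams–Daly–Zachary: the surplus is everywhere differentiable and convex, and its gradient
is a vector of choice probabilities in the relative interior of the simplex. -/
lemma surplus_grad {N : ℕ} [Nonempty (Fin N)] (μ : Measure (Fin N → ℝ))
    [IsProbabilityMeasure μ] (hac : μ ≪ volume)
    (hsupp : ∀ U : Set (Fin N → ℝ), IsOpen U → U.Nonempty → 0 < μ U)
    (hint : ∀ i, Integrable (fun x => x i) μ) (u : Fin N → ℝ) :
    ∃ g ∈ unitSimplexRI N,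
      HasFDerivAt (surplus N μ)
        (∑ i, g i • (ContinuousLinearMap.proj i : (Fin N → ℝ) →L[ℝ] ℝ)) u ∧
      ∀ u', surplus N μ u + ∑ i, g i * (u' i - u i) ≤ surplus N μ u' := by
  have hm : ∀ i, MeasurableSet (strictWin u i) := fun i => (isOpen_strictWin u i).measurableSet
  have hae := ae_exists_strictWin hac u
  -- On the event that `i` wins strictly, a family of indicators collapses to its `i`-th member.
  have hsum : ∀ {E : Type} [AddCommMonoid E] (c : Fin N → E) (x : Fin N → ℝ) (i : Fin N),
      x ∈ strictWin u i → ∑ j, (strictWin u j).indicator (fun _ => c j) x = c i := by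
    intro E _ c x i hx
    rw [Finset.sum_eq_single i]
    · exact Set.indicator_of_mem hx _
    · intro j _ hj
      exact Set.indicator_of_notMem (fun h => hj (strictWin_unique hx h)) _
    · simp
  have hintc : ∀ (c : Fin N → ℝ) (i : Fin N),
      Integrable ((strictWin u i).indicator (fun _ => c i)) μ :=
    fun c i => (integrable_const _).indicator (hm i)
  have hval : ∀ c : Fin N → ℝ,
      ∫ x, ∑ j, (strictWin u j).indicator (fun _ => c j) x ∂μ
        = ∑ j, μ.real (strictWin u j) * c j := by
    intro c
    rw [integral_finsetSum _ fun i _ => hintc c i]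
    exact Finset.sum_congr rfl fun i _ => by rw [integral_indicator_const _ (hm i), smul_eq_mul]
  refine ⟨fun i => μ.real (strictWin u i), ⟨fun i => ?_, ?_⟩, ?_, ?_⟩
  · exact ENNReal.toReal_pos (hsupp _ (isOpen_strictWin u i) (strictWin_nonempty u i)).ne'
      (measure_ne_top _ _)
  · have h1 := hval fun _ => 1
    have h2 : ∫ x, ∑ j, (strictWin u j).indicator (fun _ => (1 : ℝ)) x ∂μ = ∫ _, (1 : ℝ) ∂μ := by
      refine integral_congr_ae ?_
      filter_upwards [hae] with x ⟨i, hi⟩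
      exact hsum (fun _ => (1 : ℝ)) x i hi
    rw [h2] at h1
    simpa using h1.symm
  · let c : Fin N → ((Fin N → ℝ) →L[ℝ] ℝ) := fun i => ContinuousLinearMap.proj i
    have hD : ∫ x, ∑ j, (strictWin u j).indicator (fun _ => c j) x ∂μ
        = ∑ j, μ.real (strictWin u j) • c j := by
      rw [integral_finsetSum _ fun i _ => (integrable_const _).indicator (hm i)]
      exact Finset.sum_congr rfl fun i _ => integral_indicator_const _ (hm i)
    change HasFDerivAt _ (∑ j, μ.real (strictWin u j) • c j) u
    rw [← hD]
    have hmeas : ∀ᶠ v in nhds u, AEStronglyMeasurable (fun x => ⨆ i, (v i + x i)) μ :=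
      Filter.Eventually.of_forall fun v => (integrable_iSup_add μ hint v).aestronglyMeasurable
    have hDmeas : AEStronglyMeasurable
        (fun x => ∑ j, (strictWin u j).indicator (fun _ => c j) x) μ :=
      (integrable_finsetSum _ fun i _ =>
        (integrable_const (c i)).indicator (hm i)).aestronglyMeasurable
    have hlip : ∀ᵐ x ∂μ, LipschitzOnWith (Real.nnabs 1)
        (fun v : Fin N → ℝ => ⨆ i, (v i + x i)) Set.univ := by
      refine ae_of_all _ fun x => LipschitzOnWith.of_dist_le_mul fun v _ v' _ => ?_
      have h := (lipschitz_iSup_fin N).dist_le_mul (v + x) (v' + x)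
      rw [dist_add_right] at h
      simpa using h
    have hdiff : ∀ᵐ x ∂μ, HasFDerivAt (fun v : Fin N → ℝ => ⨆ i, (v i + x i))
        (∑ j, (strictWin u j).indicator (fun _ => c j) x) u := by
      filter_upwards [hae] with x ⟨i, hi⟩
      rw [hsum c x i hi]
      have hev : ∀ᶠ v in nhds u, x ∈ strictWin v i := by
        have hx : u ∈ strictWin x i := fun j hj => by
          have := hi j hj
          linarith
        filter_upwards [(isOpen_strictWin x i).mem_nhds hx] with v hv j hj
        have := hv j hj
        linarith
      refine HasFDerivAt.congr_of_eventuallyEq (f := fun v => v i + x i) ?_ ?_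
      · exact (c i).hasFDerivAt.add_const (x i)
      · filter_upwards [hev] with v hv using iSup_of_strictWin hv
    exact (hasFDerivAt_integral_of_dominated_loc_of_lip
      (F := fun (v x : Fin N → ℝ) => ⨆ i, (v i + x i)) (bound := fun _ => (1 : ℝ))
      Filter.univ_mem hmeas (integrable_iSup_add μ hint u) hDmeas hlip (integrable_const _)
      hdiff).2
  · intro u'
    rw [← hval fun i => u' i - u i]
    unfold surplus
    rw [← integral_add (integrable_iSup_add μ hint u)
      (integrable_finsetSum _ fun i _ => hintc (fun i => u' i - u i) i)]
    refine integral_mono_ae ((integrable_iSup_add μ hint u).add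
      (integrable_finsetSum _ fun i _ => hintc (fun i => u' i - u i) i))
      (integrable_iSup_add μ hint u') ?_
    filter_upwards [hae] with x ⟨i, hi⟩
    change (⨆ i, (u i + x i)) + ∑ j, (strictWin u j).indicator (fun _ => u' j - u j) x ≤ _
    rw [hsum (fun i => u' i - u i) x i hi, iSup_of_strictWin hi]
    linarith [le_iSup_fin (fun j => u' j + x j) i]

lemma sum_proj_single {N : ℕ} (g : Fin N → ℝ) (i : Fin N) :
    (∑ j, g j • (ContinuousLinearMap.proj j : (Fin N → ℝ) →L[ℝ] ℝ)) (Pi.single i 1) = g i := by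
  simp [Pi.single_apply]

lemma genH_eq {N : ℕ} {μ : Measure (Fin N → ℝ)} {g y : Fin N → ℝ}
    (h : HasFDerivAt (surplus N μ)
      (∑ i, g i • (ContinuousLinearMap.proj i : (Fin N → ℝ) →L[ℝ] ℝ)) (fun j => Real.log (y j)))
    (i : Fin N) :
    genH N μ y i = Real.exp (surplus N μ fun j => Real.log (y j)) * g i := by
  unfold genH
  rw [h.exp.fderiv, smul_apply, sum_proj_single, smul_eq_mul]

/-- A subgradient of a function at a point of differentiability is its gradient there. -/
lemma subgrad_eq_grad {N : ℕ} {W : (Fin N → ℝ) → ℝ} {g q b : Fin N → ℝ}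
    (h : HasFDerivAt W
      (∑ i, g i • (ContinuousLinearMap.proj i : (Fin N → ℝ) →L[ℝ] ℝ)) b)
    (hq : ∀ u, W b + ∑ i, q i * (u i - b i) ≤ W u) : q = g := by
  let D : (Fin N → ℝ) →L[ℝ] ℝ := ∑ i, q i • ContinuousLinearMap.proj i
  have hDapp : ∀ u, D u = ∑ i, q i * u i := fun u => by
    simp [D]
  have hmin : IsLocalMin (fun u => W u - D u) b := by
    refine Filter.Eventually.of_forall fun u => ?_
    have := hq u
    simp only [hDapp]
    simp only [mul_sub, Finset.sum_sub_distrib] at this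
    linarith
  have h0 := hmin.hasFDerivAt_eq_zero (h.sub D.hasFDerivAt)
  funext i
  have h1 := congrArg (fun T : (Fin N → ℝ) →L[ℝ] ℝ => T (Pi.single i 1)) h0
  simp only [sub_apply, zero_apply, D,
    sum_proj_single] at h1
  linarith

/-! ### Duality and the objective -/

/-- Since `∑ i, H_i(e^u) = e^{W(u)}`, a preimage of a point of the simplex under `H` has zero
surplus, and the point itself is a subgradient of the surplus there. -/
lemma surplus_log_inverse {N : ℕ} [Nonempty (Fin N)] (μ : Measure (Fin N → ℝ))
    [IsProbabilityMeasure μ] (hac : μ ≪ volume)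
    (hsupp : ∀ U : Set (Fin N → ℝ), IsOpen U → U.Nonempty → 0 < μ U)
    (hint : ∀ i, Integrable (fun x => x i) μ) {q y : Fin N → ℝ} (hq : q ∈ unitSimplexRI N)
    (hy : ∀ i, genH N μ y i = q i) :
    surplus N μ (fun j => Real.log (y j)) = 0 ∧
      ∀ u, ∑ i, q i * (u i - Real.log (y i)) ≤ surplus N μ u := by
  obtain ⟨g, hg, hd, hsub⟩ := surplus_grad μ hac hsupp hint fun j => Real.log (y j)
  have h1 : ∀ i, Real.exp (surplus N μ fun j => Real.log (y j)) * g i = q i := fun i => by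
    rw [← hy, genH_eq hd]
  have h2 : Real.exp (surplus N μ fun j => Real.log (y j)) = 1 := by
    have := Finset.sum_congr rfl fun i (_ : i ∈ Finset.univ) => h1 i
    rwa [← Finset.mul_sum, hg.2, hq.2, mul_one] at this
  have h3 : g = q := by
    funext i
    rw [← h1 i, h2, one_mul]
  have h4 := Real.exp_eq_one_iff _ |>.1 h2
  refine ⟨h4, fun u => ?_⟩
  have := hsub u
  rwa [h4, h3, zero_add] at this

/-- Splitting off the linear functional `a` from the objective leaves a part that is separable
across payoff vectors, minus a term depending on the unconditional probabilities only. -/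
lemma geriObj_eq {N : ℕ} (V : Finset (Fin N → ℝ)) (w : (Fin N → ℝ) → ℝ)
    (S : (Fin N → ℝ) → (Fin N → ℝ)) (p : (Fin N → ℝ) → (Fin N → ℝ)) (a : Fin N → ℝ) :
    geriObj N V w S p
      = ∑ v ∈ V, w v * (∑ i, p v i * (v i + a i) + genEntropy N S (p v))
        - (∑ i, uncond N V w p i * a i + genEntropy N S (uncond N V w p)) := by
  have h : ∑ i, uncond N V w p i * a i = ∑ v ∈ V, w v * ∑ i, p v i * a i := by
    simp only [uncond, Finset.sum_mul, Finset.mul_sum]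
    rw [Finset.sum_comm]
    exact Finset.sum_congr rfl fun v _ => Finset.sum_congr rfl fun i _ => by ring
  rw [h]
  have h' : ∀ v : Fin N → ℝ, ∑ i, v i * p v i = ∑ i, p v i * v i := fun v =>
    Finset.sum_congr rfl fun i _ => mul_comm _ _
  simp only [geriObj, geriCost, h', mul_add, Finset.sum_add_distrib]
  ring

lemma uncond_mem {N : ℕ} {V : Finset (Fin N → ℝ)} {w : (Fin N → ℝ) → ℝ}
    (hw0 : ∀ v ∈ V, 0 ≤ w v) (hw1 : ∑ v ∈ V, w v = 1) {p : (Fin N → ℝ) → (Fin N → ℝ)}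
    (hp : ∀ v ∈ V, p v ∈ unitSimplexRI N) : uncond N V w p ∈ unitSimplexRI N := by
  constructor
  · intro i
    obtain ⟨v, hv, hwv⟩ : ∃ v ∈ V, 0 < w v := by
      by_contra! h
      have := Finset.sum_nonpos h
      linarith
    exact Finset.sum_pos' (fun v hv => mul_nonneg (hw0 v hv) ((hp v hv).1 i).le)
      ⟨v, hv, mul_pos hwv ((hp v hv).1 i)⟩
  · simp only [uncond]
    rw [Finset.sum_comm, ← hw1]
    refine Finset.sum_congr rfl fun v hv => ?_
    rw [← Finset.mul_sum, (hp v hv).2, mul_one]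

/-- Proposition 3: let `S` be a differentiable right inverse of `H`, and suppose
the strategy `p*` maximizes the GERI objective over all strategies with values in the relative
interior of `Δ`, with `p*(v)` and `p⁰ = ∑_v μ(v) p*(v)` in the relative interior of `Δ`. Then:
(i) `p⁰ = ∑_{v ∈ 𝒱} μ(v) ∇W(v + log S(p⁰))` (fixed-point equation);
(ii) for every `v ∈ 𝒱` with `μ(v) > 0`,
`p*_i(v) = H_i(e^{v + log S(p⁰)}) / ∑_j H_j(e^{v + log S(p⁰)}) = ∂W(v + log S(p⁰))/∂v_i`;
(iii) `G(p*(·)) = ∑_{v ∈ 𝒱} μ(v) W(v + log S(p⁰))`. -/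
theorem geri_solution (N : ℕ) (hN : 2 ≤ N) (μ : Measure (Fin N → ℝ))
    (hprob : IsProbabilityMeasure μ) (hac : μ ≪ volume)
    (hsupp : ∀ U : Set (Fin N → ℝ), IsOpen U → U.Nonempty → 0 < μ U)
    (hint : ∀ i, Integrable (fun x => x i) μ)
    (V : Finset (Fin N → ℝ)) (w : (Fin N → ℝ) → ℝ)
    (hw0 : ∀ v ∈ V, 0 ≤ w v) (hw1 : ∑ v ∈ V, w v = 1)
    (S : (Fin N → ℝ) → (Fin N → ℝ))
    (hSpos : ∀ q ∈ unitSimplexRI N, ∀ i, 0 < S q i)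
    (hSdiff : ∀ q ∈ unitSimplexRI N, DifferentiableAt ℝ S q)
    (hSright : ∀ q ∈ unitSimplexRI N, ∀ i, genH N μ (S q) i = q i)
    (p : (Fin N → ℝ) → (Fin N → ℝ))
    (hp : ∀ v ∈ V, p v ∈ unitSimplexRI N)
    (hp0 : uncond N V w p ∈ unitSimplexRI N)
    (hmax : ∀ p' : (Fin N → ℝ) → (Fin N → ℝ), (∀ v ∈ V, p' v ∈ unitSimplexRI N) →
      geriObj N V w S p' ≤ geriObj N V w S p) :
    (∀ i, uncond N V w p i = ∑ v ∈ V, w v *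
        fderiv ℝ (surplus N μ) (fun j => v j + Real.log (S (uncond N V w p) j))
          (Pi.single i 1)) ∧
    (∀ v ∈ V, 0 < w v → ∀ i,
      p v i = genH N μ (fun j => Real.exp (v j + Real.log (S (uncond N V w p) j))) i /
          (∑ j, genH N μ (fun k => Real.exp (v k + Real.log (S (uncond N V w p) k))) j) ∧
      p v i = fderiv ℝ (surplus N μ) (fun j => v j + Real.log (S (uncond N V w p) j))
          (Pi.single i 1)) ∧
    (geriObj N V w S p =
      ∑ v ∈ V, w v * surplus N μ (fun j => v j + Real.log (S (uncond N V w p) j))) := by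
  have hNe : Nonempty (Fin N) := ⟨⟨0, by omega⟩⟩
  set W := surplus N μ with hW
  set p0 := uncond N V w p with hp0def
  set a : Fin N → ℝ := fun j => Real.log (S p0 j) with ha
  choose g hgmem hgd hgsub using surplus_grad μ hac hsupp hint
  have hinv := fun q (hq : q ∈ unitSimplexRI N) =>
    surplus_log_inverse μ hac hsupp hint hq (hSright q hq)
  -- The Fenchel inequality `q·u + Ω_S(q) ≤ W(u)`.
  have fenchel : ∀ q ∈ unitSimplexRI N, ∀ u, ∑ i, q i * u i + genEntropy N S q ≤ W u := by
    intro q hq u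
    have := (hinv q hq).2 u
    simp only [mul_sub, Finset.sum_sub_distrib] at this
    simp only [genEntropy]
    linarith
  -- Its equality case at `q = ∇W(b)`.
  have fenchel_eq : ∀ b, W b ≤ ∑ i, g b i * b i + genEntropy N S (g b) := by
    intro b
    have h1 := hgsub b fun j => Real.log (S (g b) j)
    rw [(hinv _ (hgmem b)).1] at h1
    simp only [mul_sub, Finset.sum_sub_distrib] at h1
    simp only [genEntropy]
    linarith
  have hWa : W a = 0 := (hinv p0 hp0).1
  let b : (Fin N → ℝ) → (Fin N → ℝ) := fun v j => v j + a j
  have hup : ∀ v ∈ V, w v * (∑ i, p v i * (v i + a i) + genEntropy N S (p v)) ≤ w v * W (b v) :=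
    fun v hv => mul_le_mul_of_nonneg_left (fenchel (p v) (hp v hv) (b v)) (hw0 v hv)
  have hG : geriObj N V w S p
      = ∑ v ∈ V, w v * (∑ i, p v i * (v i + a i) + genEntropy N S (p v)) := by
    rw [geriObj_eq V w S p a]
    have : ∑ i, uncond N V w p i * a i + genEntropy N S (uncond N V w p) = 0 := by
      simp [genEntropy, a, hp0def]
    rw [this, sub_zero]
  have hlow : ∑ v ∈ V, w v * W (b v) ≤ geriObj N V w S p := by
    refine le_trans ?_ (hmax (fun v => g (b v)) fun v _ => hgmem _)
    rw [geriObj_eq V w S _ a]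
    have h1 := fenchel _ (uncond_mem hw0 hw1 (p := fun v => g (b v)) fun v _ => hgmem _) a
    have h2 : ∑ v ∈ V, w v * W (b v) ≤
        ∑ v ∈ V, w v * (∑ i, g (b v) i * (v i + a i) + genEntropy N S (g (b v))) :=
      Finset.sum_le_sum fun v hv => mul_le_mul_of_nonneg_left (fenchel_eq (b v)) (hw0 v hv)
    linarith
  have hsumeq : ∑ v ∈ V, w v * (∑ i, p v i * (v i + a i) + genEntropy N S (p v))
      = ∑ v ∈ V, w v * W (b v) :=
    le_antisymm (Finset.sum_le_sum hup) (hG ▸ hlow)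
  have hterm := (Finset.sum_eq_sum_iff_of_le hup).1 hsumeq
  have hpg : ∀ v ∈ V, 0 < w v → p v = g (b v) := by
    intro v hv hwv
    have h1 := mul_left_cancel₀ hwv.ne' (hterm v hv)
    refine subgrad_eq_grad (hgd (b v)) fun u => ?_
    have h2 := fenchel (p v) (hp v hv) u
    simp only [mul_sub, Finset.sum_sub_distrib]
    change W (b v) + (_ - ∑ i, p v i * (v i + a i)) ≤ W u
    linarith
  have hfd : ∀ v i, fderiv ℝ W (b v) (Pi.single i 1) = g (b v) i := fun v i => by
    rw [(hgd (b v)).fderiv, sum_proj_single]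
  have hH : ∀ v i, genH N μ (fun j => Real.exp (b v j)) i = Real.exp (W (b v)) * g (b v) i := by
    intro v i
    have h := hgd (b v)
    have e : (fun j => Real.log (Real.exp (b v j))) = b v := by simp
    rw [genH_eq (g := g (b v)) (by rw [e]; exact h), e]
  refine ⟨fun i => ?_, fun v hv hwv i => ⟨?_, ?_⟩, ?_⟩
  · refine Finset.sum_congr rfl fun v hv => ?_
    change _ = w v * fderiv ℝ W (b v) (Pi.single i 1)
    rcases (hw0 v hv).eq_or_lt with h | h
    · rw [← h, zero_mul, zero_mul]
    · rw [hfd, hpg v hv h]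
  · change _ = genH N μ (fun j => Real.exp (b v j)) i /
      ∑ j, genH N μ (fun k => Real.exp (b v k)) j
    simp only [hH]
    rw [← Finset.mul_sum, (hgmem (b v)).2, mul_one, mul_div_cancel_left₀ _ (Real.exp_ne_zero _),
      hpg v hv hwv]
  · change _ = fderiv ℝ W (b v) (Pi.single i 1)
    rw [hfd, hpg v hv hwv]
  · rw [hG, hsumeq]
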